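/- arXiv:2302.02540 — 4 statements merged into one kernel-verified Lean document; each statement's English description precedes it below -/
import Mathlib

section
/- For β > 1/2, ∫₀^∞ η_β(x)² dx = 2^{8β−3} β² Γ(β)⁴ / (π Γ(4β)). -/
/-- The normalized Bessel function `η_β(x) = 2^β Γ(β+1) J_β(x) / x^β`, given by its
power series, with `η_β(0) = 1`. -/
noncomputable def besselEta (β : ℝ) (x : ℝ) : ℝ :=
  Real.Gamma (β + 1) *
    ∑' n : ℕ, (-1) ^ n / (n.factorial * Real.Gamma (n + β + 1)) * (x / 2) ^ (2 * n)

open MeasureTheory FourierTransform SchwartzMap in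
theorem plancherel_aux (f : ℝ → ℂ) (hf1 : Integrable f) (hf2 : MemLp f 2) :
    ∫ w, ‖𝓕 f w‖ ^ 2 = ∫ t, ‖f t‖ ^ 2 := by
  set F : Lp ℂ 2 (volume : Measure ℝ) := hf2.toLp f with hF
  have hcont : Continuous (𝓕 f) :=
    VectorFourier.fourierIntegral_continuous Real.continuous_fourierChar
      (L := innerₗ ℝ) continuous_inner hf1
  have key : ∀ᵐ w, (𝓕 F : Lp ℂ 2 (volume : Measure ℝ)) w = 𝓕 f w := by
    apply ae_eq_of_integral_contDiff_smul_eq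
    · exact (Lp.memLp _).locallyIntegrable (by norm_num)
    · exact hcont.locallyIntegrable
    · intro g g_smooth g_cpt
      have hg₁ : HasCompactSupport (Complex.ofRealCLM ∘ g) := g_cpt.comp_left rfl
      have hg₂ : ContDiff ℝ (⊤ : ℕ∞) (Complex.ofRealCLM ∘ g) := by fun_prop
      set G := hg₁.toSchwartzMap hg₂ with hG
      have hGg : ∀ x, G x = (g x : ℂ) := fun x => rfl
      calc ∫ x, g x • (𝓕 F : Lp ℂ 2 (volume : Measure ℝ)) x
          = ∫ x, G x • (𝓕 F : Lp ℂ 2 (volume : Measure ℝ)) x := by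
            simp [hGg]
        _ = ((𝓕 F : Lp ℂ 2 (volume : Measure ℝ)) : 𝓢'(ℝ, ℂ)) G := by
            rw [Lp.toTemperedDistribution_apply]
        _ = (𝓕 (F : 𝓢'(ℝ, ℂ))) G := by rw [Lp.fourier_toTemperedDistribution_eq]
        _ = ∫ x, (𝓕 G) x • F x := by
            rw [TemperedDistribution.fourier_apply, Lp.toTemperedDistribution_apply]
        _ = ∫ x, (𝓕 (G : ℝ → ℂ)) x • f x := by
            apply integral_congr_ae
            filter_upwards [hf2.coeFn_toLp] with x hx
            rw [hF, hx, SchwartzMap.fourier_coe]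
        _ = ∫ x, G x • 𝓕 f x := by
            simpa using! (VectorFourier.integral_fourierIntegral_smul_eq_flip (L := innerₗ ℝ)
              Real.continuous_fourierChar continuous_inner G.integrable hf1)
        _ = _ := by simp [hGg]
  have hn := Lp.norm_fourier_eq F
  have h1 : ∀ H : Lp ℂ 2 (volume : Measure ℝ), ‖H‖ ^ 2 = ∫ x, ‖H x‖ ^ 2 := by
    intro H
    have h := L2.inner_def (𝕜 := ℂ) H H
    rw [inner_self_eq_norm_sq_to_K] at h
    have h2 : ∀ x, inner ℂ (H x) (H x) = ((‖H x‖ ^ 2 : ℝ) : ℂ) := by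
      intro x; rw [inner_self_eq_norm_sq_to_K]; simp
    simp_rw [h2] at h
    rw [integral_complex_ofReal] at h
    apply Complex.ofReal_injective
    rw [← h]
    simp
  calc ∫ w, ‖𝓕 f w‖ ^ 2 = ∫ w, ‖(𝓕 F : Lp ℂ 2 (volume : Measure ℝ)) w‖ ^ 2 := by
        apply integral_congr_ae
        filter_upwards [key] with w hw
        rw [hw]
    _ = ∫ w, ‖F w‖ ^ 2 := by rw [← h1, ← h1, hn]
    _ = _ := by
        apply integral_congr_ae
        filter_upwards [hf2.coeFn_toLp] with w hw
        rw [hw]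
/-- the weight `(1-t²)_+^a` -/
noncomputable def wF (a t : ℝ) : ℝ := (max (1 - t ^ 2) 0) ^ a

theorem wF_cont {a : ℝ} (ha : 0 < a) : Continuous (wF a) := by
  unfold wF
  exact Continuous.rpow_const (by fun_prop) (fun _ => Or.inr ha.le)

theorem wF_nonneg (a t : ℝ) : 0 ≤ wF a t := Real.rpow_nonneg (le_max_right _ _) _

theorem wF_zero {a : ℝ} (ha : 0 < a) {t : ℝ} (ht : 1 ≤ |t|) : wF a t = 0 := by
  have : 1 - t ^ 2 ≤ 0 := by rw [← sq_abs]; nlinarith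
  rw [wF, max_eq_right this, Real.zero_rpow ha.ne']

theorem wF_supp {a : ℝ} (ha : 0 < a) : HasCompactSupport (wF a) := by
  apply HasCompactSupport.intro (isCompact_Icc (a := (-1 : ℝ)) (b := 1))
  intro t ht
  apply wF_zero ha
  by_contra h
  push Not at h
  exact ht ⟨(abs_lt.1 h).1.le, (abs_lt.1 h).2.le⟩

theorem wF_sq (a t : ℝ) : wF a t ^ 2 = wF (2 * a) t := by
  rw [wF, wF, mul_comm, Real.rpow_mul (le_max_right _ _)]
  norm_num

open MeasureTheory Set in
theorem beta_real (u v : ℝ) (hu : 0 < u) (hv : 1 < v) :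
    ∫ y in Ioi (0 : ℝ), y ^ (u - 1) * (max (1 - y) 0) ^ (v - 1) =
      Real.Gamma u * Real.Gamma v / Real.Gamma (u + v) := by
  have h := Complex.betaIntegral_eq_Gamma_mul_div (u : ℂ) v (by simpa) (by simp; linarith)
  rw [← Complex.ofReal_add, Complex.Gamma_ofReal, Complex.Gamma_ofReal, Complex.Gamma_ofReal] at h
  have h2 : Complex.betaIntegral u v =
      ((∫ y in (0 : ℝ)..1, y ^ (u - 1) * (1 - y) ^ (v - 1) : ℝ) : ℂ) := by
    rw [Complex.betaIntegral, ← intervalIntegral.integral_ofReal]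
    apply intervalIntegral.integral_congr
    intro y hy
    rw [uIcc_of_le zero_le_one] at hy
    simp only
    push_cast
    rw [Complex.ofReal_cpow hy.1, Complex.ofReal_cpow (by linarith [hy.2])]
    push_cast; rfl
  rw [h2] at h
  have h3 : ∫ y in (0 : ℝ)..1, y ^ (u - 1) * (1 - y) ^ (v - 1) =
    Real.Gamma u * Real.Gamma v / Real.Gamma (u + v) := by exact_mod_cast h
  rw [← h3, intervalIntegral.integral_of_le zero_le_one]
  rw [setIntegral_eq_of_subset_of_forall_sdiff_eq_zero measurableSet_Ioi
    (Ioc_subset_Ioi_self : Ioc (0 : ℝ) 1 ⊆ Ioi 0)]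
  · apply setIntegral_congr_fun measurableSet_Ioc
    intro y hy
    simp only
    rw [max_eq_left (by linarith [hy.2])]
  · intro y hy
    have : 1 < y := by
      by_contra hh
      exact hy.2 ⟨hy.1, not_lt.1 hh⟩
    rw [max_eq_right (by linarith), Real.zero_rpow (by linarith), mul_zero]

open MeasureTheory Set in
theorem wF_moment {a : ℝ} (ha : 0 < a) (n : ℕ) :
    ∫ t, t ^ (2 * n) * wF a t =
      Real.Gamma (n + 1 / 2) * Real.Gamma (a + 1) / Real.Gamma (n + a + 3 / 2) := by
  have h0 : ∀ t : ℝ, t ^ (2 * n) * wF a t = (fun s => s ^ (2 * n) * wF a s) |t| := by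
    intro t
    simp [wF, pow_mul]
  rw [integral_congr_ae (Filter.Eventually.of_forall h0), 
    integral_comp_abs (f := fun s => s ^ (2 * n) * wF a s), ← integral_const_mul]
  have hb := beta_real (n + 1 / 2) (a + 1) (by positivity) (by linarith)
  rw [← integral_comp_rpow_Ioi_of_pos (p := 2) (by norm_num)] at hb
  rw [show (n : ℝ) + a + 3 / 2 = n + 1 / 2 + (a + 1) by ring, ← hb]
  apply setIntegral_congr_fun measurableSet_Ioi
  intro t ht
  have ht' : (0 : ℝ) < t := ht
  simp only [smul_eq_mul, wF]
  rw [← Real.rpow_mul ht'.le, Real.rpow_two]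
  have : t ^ (2 * n) = t ^ ((2 : ℝ) - 1) * t ^ ((2 : ℝ) * (n + 1 / 2 - 1)) := by
    rw [← Real.rpow_add ht', ← Real.rpow_natCast]
    congr 1
    push_cast; ring
  rw [this, add_sub_cancel_right]
  ring

theorem gamma_half (n : ℕ) :
    Real.Gamma (n + 1 / 2) = (2 * n).factorial * Real.sqrt Real.pi / (4 ^ n * n.factorial) := by
  induction n with
  | zero => simp [Real.Gamma_one_half_eq, -one_div]
  | succ k ih =>
    rw [show ((k + 1 : ℕ) : ℝ) + 1 / 2 = (k + 1 / 2) + 1 by push_cast; ring,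
      Real.Gamma_add_one (by positivity), ih, show 2 * (k + 1) = 2 * k + 1 + 1 by ring,
      Nat.factorial_succ, Nat.factorial_succ, Nat.factorial_succ]
    push_cast
    field_simp
    ring

open MeasureTheory in
theorem poisson {β : ℝ} (hβ : 1 / 2 < β) (x : ℝ) :
    ∫ t, Real.cos (x * t) * wF (β - 1 / 2) t =
      Real.sqrt Real.pi * Real.Gamma (β + 1 / 2) / Real.Gamma (β + 1) * besselEta β x := by
  have ha : 0 < β - 1 / 2 := by linarith
  set a := β - 1 / 2 with haa
  have hint : ∀ n : ℕ, Integrable (fun t => t ^ (2 * n) * wF a t) := fun n =>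
    ((by fun_prop : Continuous fun t : ℝ => t ^ (2 * n)).mul
      (wF_cont ha)).integrable_of_hasCompactSupport (wF_supp ha).mul_left
  have hle : ∀ (n : ℕ) t, t ^ (2 * n) * wF a t ≤ wF a t := by
    intro n t
    rcases le_total 1 |t| with h | h
    · rw [wF_zero ha h, mul_zero]
    · apply mul_le_of_le_one_left (wF_nonneg _ _)
      rw [pow_mul, ← sq_abs]
      exact pow_le_one₀ (by positivity) (pow_le_one₀ (abs_nonneg _) h)
  have hnn : ∀ (n : ℕ) t, 0 ≤ t ^ (2 * n) * wF a t := fun n t =>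
    mul_nonneg (by rw [pow_mul]; positivity) (wF_nonneg _ _)
  set c : ℕ → ℝ := fun n => (-1) ^ n * x ^ (2 * n) / (2 * n).factorial with hc
  have hs := hasSum_integral_of_summable_integral_norm (μ := volume)
    (F := fun n t => c n * (t ^ (2 * n) * wF a t)) (fun n => (hint n).const_mul _) (by
      have h1 : Summable fun n => ‖c n‖ * ∫ t, wF a t := by
        apply Summable.mul_right
        exact (Real.hasSum_cos x).summable.norm
      refine Summable.of_nonneg_of_le (fun n => by positivity) (fun n => ?_) h1
      simp_rw [norm_mul (c n)]
      rw [integral_const_mul]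
      apply mul_le_mul_of_nonneg_left _ (norm_nonneg _)
      refine integral_mono (hint n).norm (by simpa using hint 0) (fun t => ?_)
      simp only [Real.norm_eq_abs, abs_of_nonneg (hnn n t)]
      exact hle n t)
  have h2 : ∀ t, ∑' n, c n * (t ^ (2 * n) * wF a t) = Real.cos (x * t) * wF a t := by
    intro t
    rw [Real.cos_eq_tsum, ← tsum_mul_right]
    congr 1; ext n
    simp only [hc]; rw [mul_pow]; ring
  simp_rw [h2] at hs
  rw [← hs.tsum_eq, besselEta, ← mul_assoc, ← tsum_mul_left]
  congr 1; ext n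
  rw [integral_const_mul, wF_moment ha, gamma_half]
  have g1 := Real.Gamma_pos_of_pos (show 0 < β + 1 by linarith)
  have g2 := Real.Gamma_pos_of_pos (show 0 < n + β + 1 by positivity)
  rw [show a + 1 = β + 1 / 2 by rw [haa]; ring, show n + a + 3 / 2 = n + β + 1 by rw [haa]; ring]
  simp only [hc]
  rw [div_pow, pow_mul 2 2 n]
  norm_num only
  field_simp


open MeasureTheory FourierTransform in
theorem besselEta_sq_integral (β : ℝ) (hβ : 1 / 2 < β) :
    (∫ x in Set.Ioi (0 : ℝ), (besselEta β x) ^ 2) =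
      2 ^ (8 * β - 3) * β ^ 2 * Real.Gamma β ^ 4 / (Real.pi * Real.Gamma (4 * β)) := by
  have ha : 0 < β - 1 / 2 := by linarith
  set k := Real.sqrt Real.pi * Real.Gamma (β + 1 / 2) / Real.Gamma (β + 1) with hk
  have g0 := Real.Gamma_pos_of_pos (show 0 < β by linarith)
  have g1 := Real.Gamma_pos_of_pos (show 0 < β + 1 by linarith)
  have g2 := Real.Gamma_pos_of_pos (show 0 < β + 1 / 2 by linarith)
  have g3 := Real.Gamma_pos_of_pos (show 0 < 2 * β by linarith)
  have g4 := Real.Gamma_pos_of_pos (show 0 < 4 * β by linarith)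
  have g5 := Real.Gamma_pos_of_pos (show 0 < 2 * β + 1 / 2 by linarith)
  have hpi := Real.pi_pos
  have hkpos : 0 < k := by positivity
  have hcont : Continuous (fun t => (wF (β - 1 / 2) t : ℂ)) :=
    Complex.continuous_ofReal.comp (wF_cont ha)
  have hsupp : HasCompactSupport (fun t => (wF (β - 1 / 2) t : ℂ)) :=
    (wF_supp ha).comp_left (g := fun x : ℝ => (x : ℂ)) (by simp)
  have hI := hcont.integrable_of_hasCompactSupport (μ := volume) hsupp
  have hP := plancherel_aux _ hI (hcont.memLp_of_hasCompactSupport hsupp)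
  have hodd : ∀ x, ∫ t, Real.sin (x * t) * wF (β - 1 / 2) t = 0 := by
    intro x
    have h := integral_neg_eq_self (fun t => Real.sin (x * t) * wF (β - 1 / 2) t) volume
    have h2 : ∀ t, Real.sin (x * -t) * wF (β - 1 / 2) (-t) =
        - (Real.sin (x * t) * wF (β - 1 / 2) t) := by
      intro t; simp [wF]
    simp_rw [h2] at h
    rw [integral_neg] at h
    linarith
  have hF : ∀ w, 𝓕 (fun t => (wF (β - 1 / 2) t : ℂ)) w =
      ((k * besselEta β (2 * Real.pi * w) : ℝ) : ℂ) := by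
    intro w
    rw [← poisson hβ, Real.fourier_real_eq_integral_exp_smul]
    have i1 : Integrable (fun t =>
        ((Real.cos (2 * Real.pi * w * t) * wF (β - 1 / 2) t : ℝ) : ℂ)) :=
      Integrable.ofReal (((by fun_prop : Continuous fun t : ℝ => Real.cos (2 * Real.pi * w * t)).mul
      (wF_cont ha)).integrable_of_hasCompactSupport (wF_supp ha).mul_left)
    have i2 : Integrable (fun t =>
        ((Real.sin (2 * Real.pi * w * t) * wF (β - 1 / 2) t : ℝ) : ℂ)) :=
      Integrable.ofReal (((by fun_prop : Continuous fun t : ℝ => Real.sin (2 * Real.pi * w * t)).mul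
      (wF_cont ha)).integrable_of_hasCompactSupport (wF_supp ha).mul_left)
    have h1 : ∀ t : ℝ, Complex.exp (↑(-2 * Real.pi * t * w) * Complex.I) •
        (wF (β - 1 / 2) t : ℂ) =
        ((Real.cos (2 * Real.pi * w * t) * wF (β - 1 / 2) t : ℝ) : ℂ) -
        Complex.I * ((Real.sin (2 * Real.pi * w * t) * wF (β - 1 / 2) t : ℝ) : ℂ) := by
      intro t
      rw [show -2 * Real.pi * t * w = - (2 * Real.pi * w * t) by ring, Complex.exp_mul_I,
        ← Complex.ofReal_cos, ← Complex.ofReal_sin, Real.cos_neg, Real.sin_neg, smul_eq_mul]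
      push_cast
      ring
    simp_rw [h1]
    rw [integral_sub i1 (i2.const_mul _), integral_const_mul, integral_complex_ofReal, integral_complex_ofReal,
      hodd]
    simp
  simp_rw [hF, Complex.norm_real, Real.norm_eq_abs, sq_abs, wF_sq, mul_pow] at hP
  rw [integral_const_mul] at hP
  have hm := wF_moment (a := 2 * (β - 1 / 2)) (by linarith) 0
  simp only [mul_zero, pow_zero, one_mul, Nat.cast_zero, zero_add] at hm
  rw [hm] at hP
  have hsc := Measure.integral_comp_mul_left (fun x => besselEta β x ^ 2) (2 * Real.pi)
  have habs : ∫ x, besselEta β x ^ 2 = 2 * ∫ x in Set.Ioi (0 : ℝ), besselEta β x ^ 2 := by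
    rw [← integral_comp_abs]
    congr 1; ext x
    simp [besselEta, pow_mul, div_pow]
  rw [hsc, habs, abs_of_pos (by positivity), smul_eq_mul] at hP
  set J := ∫ x in Set.Ioi (0 : ℝ), besselEta β x ^ 2
  have d1 := Real.Gamma_mul_Gamma_add_half β
  have d2 := Real.Gamma_mul_Gamma_add_half (2 * β)
  rw [show 2 * (2 * β) = 4 * β by ring] at d2
  rw [show 2 * (β - 1 / 2) + 1 = 2 * β by ring,
    show 2 * (β - 1 / 2) + 3 / 2 = 2 * β + 1 / 2 by ring, Real.Gamma_one_half_eq, hk,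
    Real.Gamma_add_one (by linarith)] at hP
  have e1 : Real.Gamma (β + 1 / 2) =
      Real.Gamma (2 * β) * 2 ^ (1 - 2 * β) * √Real.pi / Real.Gamma β := by
    rw [← d1]; field_simp
  have e2 : Real.Gamma (2 * β + 1 / 2) =
      Real.Gamma (4 * β) * 2 ^ (1 - 4 * β) * √Real.pi / Real.Gamma (2 * β) := by
    rw [← d2]; field_simp
  rw [e1, e2] at hP
  have p1 : (2 : ℝ) ^ (1 - 2 * β) = 2 / (2 ^ β) ^ 2 := by
    rw [Real.rpow_sub (by norm_num), Real.rpow_one, mul_comm, Real.rpow_mul (by norm_num),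
      Real.rpow_two]
  have p2 : (2 : ℝ) ^ (1 - 4 * β) = 2 / (2 ^ β) ^ 4 := by
    rw [Real.rpow_sub (by norm_num), Real.rpow_one, mul_comm 4, Real.rpow_mul (by norm_num)]
    norm_num
  have p3 : (2 : ℝ) ^ (8 * β - 3) = (2 ^ β) ^ 8 / 8 := by
    rw [Real.rpow_sub (by norm_num), mul_comm 8, Real.rpow_mul (by norm_num)]
    norm_num
  rw [p1, p2] at hP
  rw [p3]
  have q : 0 < (2 : ℝ) ^ β := by positivity
  have hsq : √Real.pi ^ 2 = Real.pi := Real.sq_sqrt hpi.le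
  have hspos : 0 < √Real.pi := by positivity
  set s := √Real.pi
  generalize (2 : ℝ) ^ β = q at *
  have hb : 0 < β := by linarith
  rw [← hsq] at hP ⊢
  field_simp at hP ⊢
  linarith
end

section
/- The function α ↦ (2^{8α−6}/π) · α²(α−1)²/(4α−3) · Γ(α−1)⁴/Γ(4α−4), defined for α > 1, attains the value 12π at α = 3/2, and 12π is its minimum value on (1, ∞). -/
/-- The logarithm of the rational factor in the product formula. -/
noncomputable def smH (x : ℝ) : ℝ :=
  Real.log (x + 5 / 4) + Real.log (x + 1 / 2) + Real.log (x + 3 / 4) - 2 * Real.log (x + 2)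
    - Real.log x

noncomputable def smG (x : ℝ) : ℝ :=
  1 / (x + 5 / 4) + 1 / (x + 1 / 2) + 1 / (x + 3 / 4) - 2 * (1 / (x + 2)) - 1 / x

noncomputable def smG' (x : ℝ) : ℝ :=
  -1 / (x + 5 / 4) ^ 2 + -1 / (x + 1 / 2) ^ 2 + -1 / (x + 3 / 4) ^ 2 - 2 * (-1 / (x + 2) ^ 2)
    - -1 / x ^ 2

lemma sm_log (a x : ℝ) (h : 0 < x + a) :
    HasDerivAt (fun y => Real.log (y + a)) (1 / (x + a)) x :=
  ((hasDerivAt_id x).add_const a).log h.ne'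

lemma sm_inv (a x : ℝ) (h : 0 < x + a) :
    HasDerivAt (fun y => 1 / (y + a)) (-1 / (x + a) ^ 2) x := by
  simp only [one_div]
  exact ((hasDerivAt_id x).add_const a).inv h.ne'

lemma smH_deriv (x : ℝ) (hx : 0 < x) : HasDerivAt smH (smG x) x := by
  have h0 := sm_log 0 x (by linarith)
  simp only [add_zero] at h0
  exact ((((sm_log (5/4) x (by linarith)).add (sm_log (1/2) x (by linarith))).add
    (sm_log (3/4) x (by linarith))).sub ((sm_log 2 x (by linarith)).const_mul 2)).sub h0

lemma smG_deriv (x : ℝ) (hx : 0 < x) : HasDerivAt smG (smG' x) x := by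
  have h0 := sm_inv 0 x (by linarith)
  simp only [add_zero] at h0
  exact ((((sm_inv (5/4) x (by linarith)).add (sm_inv (1/2) x (by linarith))).add
    (sm_inv (3/4) x (by linarith))).sub ((sm_inv 2 x (by linarith)).const_mul 2)).sub h0

lemma smG_nonneg (x : ℝ) (hx : 1 ≤ x) : 0 ≤ smG x := by
  have h0 : 0 < x := by linarith
  have : smG x = (3/2*x^3+9/8*x^2-45/32*x-15/16) /
      ((x + 5 / 4) * (x + 1 / 2) * (x + 3 / 4) * (x + 2) * x) := by
    unfold smG; field_simp; ring
  rw [this]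
  apply div_nonneg _ (by positivity)
  nlinarith [mul_nonneg (sub_nonneg.2 hx) h0.le,
    mul_nonneg (mul_nonneg (sub_nonneg.2 hx) h0.le) h0.le]

lemma smH_mono {x y : ℝ} (hx : 1 ≤ x) (hxy : x ≤ y) : smH x ≤ smH y := by
  have : MonotoneOn smH (Set.Ici 1) := by
    apply monotoneOn_of_hasDerivWithinAt_nonneg (f' := smG) (convex_Ici 1)
    · intro z hz
      have hz : (1:ℝ) ≤ z := hz
      exact (smH_deriv z (by linarith)).continuousAt.continuousWithinAt
    · intro z hz
      rw [interior_Ici] at hz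
      have hz : (1:ℝ) < z := hz
      exact (smH_deriv z (by linarith)).hasDerivWithinAt
    · intro z hz
      rw [interior_Ici] at hz
      exact smG_nonneg z (le_of_lt hz)
  exact this hx (hx.trans hxy) hxy

/-- first convexity -/
lemma sm_conv1 : ConvexOn ℝ (Set.Ioo (0:ℝ) (11/10))
    (fun x => smH x + 3/2 * Real.log (x + 2)) := by
  have hd : ∀ x ∈ Set.Ioo (0:ℝ) (11/10), HasDerivAt (fun x => smH x + 3/2 * Real.log (x + 2))
      (smG x + 3/2 * (1 / (x+2))) x := fun x hx =>
    (smH_deriv x hx.1).add ((sm_log 2 x (by linarith [hx.1])).const_mul _)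
  apply convexOn_of_hasDerivWithinAt2_nonneg (f' := fun x => smG x + 3/2 * (1 / (x+2)))
    (f'' := fun x => smG' x + 3/2 * (-1 / (x+2)^2)) (convex_Ioo _ _)
  · intro x hx
    exact (hd x hx).continuousAt.continuousWithinAt
  · intro x hx
    rw [interior_Ioo] at *
    exact (hd x hx).hasDerivWithinAt
  · intro x hx
    rw [interior_Ioo] at *
    exact ((smG_deriv x hx.1).add
      ((sm_inv 2 x (by linarith [hx.1])).const_mul _)).hasDerivWithinAt
  · intro x hx
    rw [interior_Ioo] at hx
    obtain ⟨h0, h1⟩ := hx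
    have : smG' x + 3/2 * (-1 / (x+2)^2) =
      (225/256 + 2085/256*x + 53955/2048*x^2 + 18675/512*x^3 + 6777/512*x^4 - 327/16*x^5
        - 405/16*x^6 - 21/2*x^7 - 3/2*x^8) /
      ((x + 5 / 4)^2 * (x + 1 / 2)^2 * (x + 3 / 4)^2 * (x + 2)^2 * x^2) := by
      unfold smG'; field_simp; ring
    rw [this]
    apply div_nonneg _ (by positivity)
    have k : ∀ n : ℕ, 0 ≤ x^n * (11/10 - x) := fun n =>
      mul_nonneg (by positivity) (by linarith)
    have := k 0
    have := k 1
    have := k 2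
    have := k 3
    have := k 4
    have := k 5
    have := k 6
    have := k 7
    ring_nf at *
    linarith

lemma sm_conv2 : ConvexOn ℝ (Set.Ioi (0:ℝ))
    (fun x => smH x + 3/2 * Real.log (x + 2) - 3/2 * Real.log (x + 1)) := by
  have hd : ∀ x ∈ Set.Ioi (0:ℝ), HasDerivAt
      (fun x => smH x + 3/2 * Real.log (x + 2) - 3/2 * Real.log (x + 1))
      (smG x + 3/2 * (1 / (x+2)) - 3/2 * (1 / (x+1))) x := fun x hx => by
    have hx : 0 < x := hx
    exact ((smH_deriv x hx).add ((sm_log 2 x (by linarith)).const_mul _)).sub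
      ((sm_log 1 x (by linarith)).const_mul _)
  apply convexOn_of_hasDerivWithinAt2_nonneg
    (f' := fun x => smG x + 3/2 * (1 / (x+2)) - 3/2 * (1 / (x+1)))
    (f'' := fun x => smG' x + 3/2 * (-1 / (x+2)^2) - 3/2 * (-1 / (x+1)^2)) (convex_Ioi _)
  · intro x hx
    exact (hd x hx).continuousAt.continuousWithinAt
  · intro x hx
    rw [interior_Ioi] at *
    exact (hd x hx).hasDerivWithinAt
  · intro x hx
    rw [interior_Ioi] at *
    have hx : 0 < x := hx
    exact (((smG_deriv x hx).add ((sm_inv 2 x (by linarith)).const_mul _)).sub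
      ((sm_inv 1 x (by linarith)).const_mul _)).hasDerivWithinAt
  · intro x hx
    rw [interior_Ioi] at hx
    have hx : 0 < x := hx
    have : smG' x + 3/2 * (-1 / (x+2)^2) - 3/2 * (-1 / (x+1)^2) =
      (225/256 + 2535/256*x + 91815/2048*x^2 + 112155/1024*x^3 + 164193/1024*x^4 + 18633/128*x^5
        + 10329/128*x^6 + 201/8*x^7 + 27/8*x^8) /
      ((x + 5 / 4)^2 * (x + 1 / 2)^2 * (x + 3 / 4)^2 * (x + 2)^2 * x^2 * (x+1)^2) := by
      unfold smG'; field_simp; ring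
    rw [this]
    positivity

noncomputable def smPsi (n : ℕ) (x : ℝ) : ℝ :=
  ∑ m ∈ Finset.range (n + 1), smH (x + m) + 3/2 * Real.log (x + n + 2)

lemma smPsi_conv (n : ℕ) : ConvexOn ℝ (Set.Ioo (0:ℝ) (11/10)) (smPsi n) := by
  induction n with
  | zero =>
    have := sm_conv1
    unfold smPsi
    simpa using this
  | succ n ih =>
    have h2 := (sm_conv2.translate_left ((n:ℝ) + 1)).subset
      (s := Set.Ioo (0:ℝ) (11/10)) (fun x hx => by
        have := hx.1
        simp only [Set.mem_preimage, Set.mem_Ioi]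
        positivity) (convex_Ioo _ _)
    refine (ih.add h2).congr ?_
    intro x hx
    simp only [smPsi, Pi.add_apply, Function.comp_apply]
    rw [Finset.sum_range_succ _ (n+1)]
    push_cast
    have e1 : x + (n:ℝ) + 2 = x + (n+1) + 1 := by ring
    rw [e1]
    ring

/-- The combination of log-Gamma values. -/
noncomputable def smF (x : ℝ) : ℝ :=
  2 * Real.log (Real.Gamma (x + 2)) + Real.log (Real.Gamma x)
    - Real.log (Real.Gamma (x + 5/4)) - Real.log (Real.Gamma (x + 1/2))
    - Real.log (Real.Gamma (x + 3/4))

open Real.BohrMollerup Filter Topology in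
lemma smF_tendsto (x : ℝ) (hx : 0 < x) :
    Tendsto (fun n : ℕ => 3/2 * Real.log n + ∑ m ∈ Finset.range (n + 1), smH (x + m)) atTop
      (𝓝 (smF x)) := by
  have h := ((((tendsto_log_gamma (x := x + 2) (by linarith)).const_mul 2).add
    (tendsto_log_gamma hx)).sub (tendsto_log_gamma (x := x + 5/4) (by linarith))).sub
    (tendsto_log_gamma (x := x + 1/2) (by linarith)) |>.sub
    (tendsto_log_gamma (x := x + 3/4) (by linarith))
  refine h.congr ?_
  intro n
  simp only [logGammaSeq, smH, Finset.sum_sub_distrib, Finset.sum_add_distrib, ← Finset.mul_sum]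
  have e : ∀ a : ℝ, ∑ m ∈ Finset.range (n+1), Real.log (x + m + a)
      = ∑ m ∈ Finset.range (n+1), Real.log (x + a + m) := fun a =>
    Finset.sum_congr rfl fun m _ => by rw [add_right_comm]
  rw [e, e, e, e]
  ring

open Filter Topology in
lemma smPsi_tendsto (x : ℝ) (hx : 0 < x) :
    Tendsto (fun n : ℕ => smPsi n x) atTop (𝓝 (smF x)) := by
  have h1 : Tendsto (fun n : ℕ => Real.log (1 + (x + 2) / (n:ℝ))) atTop (𝓝 0) := by
    have : Tendsto (fun n : ℕ => 1 + (x + 2) / (n:ℝ)) atTop (𝓝 (1 + 0)) :=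
      tendsto_const_nhds.add (tendsto_const_div_atTop_nhds_zero_nat (x+2))
    rw [add_zero] at this
    simpa using this.log one_ne_zero
  have h2 := (smF_tendsto x hx).add (h1.const_mul (3/2))
  rw [mul_zero, add_zero] at h2
  refine h2.congr' ?_
  filter_upwards [eventually_gt_atTop 0] with n hn
  have hn : (0:ℝ) < n := by exact_mod_cast hn
  have e : x + n + 2 = n * (1 + (x+2)/n) := by field_simp; ring
  rw [smPsi, e, Real.log_mul hn.ne' (by positivity)]
  ring

lemma smF_conv : ConvexOn ℝ (Set.Ioo (0:ℝ) (11/10)) smF := by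
  refine ⟨convex_Ioo _ _, ?_⟩
  intro x hx y hy a b ha hb hab
  have hz := (convex_Ioo (0:ℝ) (11/10)) hx hy ha hb hab
  exact le_of_tendsto_of_tendsto' (smPsi_tendsto _ hz.1)
    (((smPsi_tendsto x hx.1).const_smul a).add ((smPsi_tendsto y hy.1).const_smul b))
    (fun n => (smPsi_conv n).2 hx hy ha hb hab)

lemma smF_mono {x : ℝ} (hx : 1 ≤ x) : smF 1 ≤ smF x := by
  refine le_of_tendsto_of_tendsto' (smF_tendsto 1 one_pos) (smF_tendsto x (by linarith)) ?_
  intro n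
  gcongr with m hm
  have : (0:ℝ) ≤ m := by positivity
  exact smH_mono (by linarith) (by linarith)

/-- Log of the target function, up to a constant. -/
noncomputable def smP (s : ℝ) : ℝ :=
  8 * Real.log 2 * s + 2 * Real.log (s + 1) + 2 * Real.log s - Real.log (4 * s + 1)
    + 4 * Real.log (Real.Gamma s) - Real.log (Real.Gamma (4 * s))

lemma sm_dup (s : ℝ) (hs : 0 < s) :
    Real.log (Real.Gamma s) + Real.log (Real.Gamma (s + 1/2)) =
      Real.log (Real.Gamma (2 * s)) + (1 - 2 * s) * Real.log 2 + Real.log (√Real.pi) := by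
  have h := congrArg Real.log (Real.Gamma_mul_Gamma_add_half_of_pos hs)
  have p1 := (Real.Gamma_pos_of_pos hs).ne'
  have p2 := (Real.Gamma_pos_of_pos (show 0 < s + 1/2 by linarith)).ne'
  have p3 := (Real.Gamma_pos_of_pos (show 0 < 2 * s by linarith)).ne'
  rw [Real.log_mul p1 p2, Real.log_mul (by positivity) (by positivity),
    Real.log_mul p3 (by positivity), Real.log_rpow two_pos] at h
  exact h

lemma sm_add_one (s : ℝ) (hs : 0 < s) :
    Real.log (Real.Gamma (s + 1)) = Real.log s + Real.log (Real.Gamma s) := by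
  rw [Real.Gamma_add_one hs.ne', Real.log_mul hs.ne' (Real.Gamma_pos_of_pos hs).ne']

lemma smP_eq (s : ℝ) (hs : 0 < s) :
    smP s = smF s + (3 * Real.log (√Real.pi) + 1/2 * Real.log 2) := by
  have a1 := sm_dup s hs
  have a2 := sm_dup (2*s) (by linarith)
  have a3 := sm_dup (s+1/4) (by linarith)
  have b1 := sm_add_one s hs
  have b2 := sm_add_one (s+1) (by linarith)
  have b3 := sm_add_one (s+1/4) (by linarith)
  have c1 : Real.log (4 * s + 1) = 2 * Real.log 2 + Real.log (s + 1/4) := by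
    rw [show 4 * s + 1 = 2 ^ 2 * (s + 1/4) by ring, Real.log_mul (by norm_num) (by linarith),
      Real.log_pow]
    norm_num
  rw [show s + 1/4 + 1/2 = s + 3/4 by ring, show 2 * (s+1/4) = 2 * s + 1/2 by ring] at a3
  rw [show 2 * (2 * s) = 4 * s by ring] at a2
  rw [show s + 1 + 1 = s + 2 by ring] at b2
  rw [show s + 1/4 + 1 = s + 5/4 by ring] at b3
  unfold smP smF
  rw [c1]
  linarith

lemma smP_deriv : HasDerivAt smP 0 (1/2) := by
  have g1 : HasDerivAt (fun s => Real.log (Real.Gamma s))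
      (-(Real.eulerMascheroniConstant + 2 * Real.log 2)) (1/2) := by
    have := Real.hasDerivAt_Gamma_one_half.log (by rw [Real.Gamma_one_half_eq]; positivity)
    rw [Real.Gamma_one_half_eq] at this
    convert this using 1
    have : √Real.pi ≠ 0 := by positivity
    field_simp
  have g2 : HasDerivAt (fun s : ℝ => Real.log (Real.Gamma (4 * s)))
      ((1 - Real.eulerMascheroniConstant) * 4) (1/2) := by
    have h := Real.hasDerivAt_Gamma_nat 1
    have h' : HasDerivAt Real.Gamma (1 - Real.eulerMascheroniConstant) (4 * (1/2)) := by
      convert h using 1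
      · simp; ring
      · norm_num
    have h4 : HasDerivAt (fun s : ℝ => 4 * s) 4 (1/2) := by
      simpa using (hasDerivAt_id (1/2 : ℝ)).const_mul 4
    have e : Real.Gamma (4 * (1/2)) = 1 := by
      rw [show (4 * (1/2) : ℝ) = 2 by norm_num, Real.Gamma_two]
    have := (h'.comp (1/2 : ℝ) h4).log (by simp only [Function.comp_apply]; rw [e]; norm_num)
    simp only [Function.comp_apply] at this
    rw [e, div_one] at this
    exact this
  have l4 : HasDerivAt (fun s : ℝ => Real.log (4 * s + 1)) (4 / (4 * (1/2) + 1)) (1/2) := by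
    have h4 : HasDerivAt (fun s : ℝ => 4 * s + 1) 4 (1/2) := by
      simpa using ((hasDerivAt_id (1/2 : ℝ)).const_mul 4).add_const 1
    exact h4.log (by norm_num)
  have l0 := sm_log 0 (1/2) (by norm_num)
  simp only [add_zero] at l0
  have := (((((((hasDerivAt_id (1/2 : ℝ)).const_mul (8 * Real.log 2)).add
    ((sm_log 1 (1/2) (by norm_num)).const_mul 2)).add (l0.const_mul 2)).sub l4).add
    (g1.const_mul 4)).sub g2)
  refine HasDerivAt.congr_deriv this ?_
  norm_num
  ring

lemma smP_min (s : ℝ) (hs : 0 < s) : smP (1/2) ≤ smP s := by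
  have hd : HasDerivAt smF 0 (1/2) := by
    have h := smP_deriv.sub_const (3 * Real.log (√Real.pi) + 1/2 * Real.log 2)
    refine h.congr_of_eventuallyEq ?_
    filter_upwards [Ioi_mem_nhds (show (0:ℝ) < 1/2 by norm_num)] with y hy
    rw [smP_eq y hy]; ring
  have hm : (1/2 : ℝ) ∈ Set.Ioo (0:ℝ) (11/10) := by constructor <;> norm_num
  have key : ∀ t ∈ Set.Ioo (0:ℝ) (11/10), smF (1/2) ≤ smF t := by
    intro t ht
    rcases lt_trichotomy t (1/2) with h | h | h
    · have := smF_conv.slope_le_of_hasDerivAt ht hm h hd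
      rw [slope_def_field, div_le_iff₀ (by linarith)] at this
      linarith
    · rw [h]
    · have := smF_conv.le_slope_of_hasDerivAt hm ht h hd
      rw [slope_def_field, le_div_iff₀ (by linarith)] at this
      linarith
  have : smF (1/2) ≤ smF s := by
    rcases le_or_gt 1 s with h | h
    · exact (key 1 (by constructor <;> norm_num)).trans (smF_mono h)
    · exact key s ⟨hs, by linarith⟩
  rw [smP_eq s hs, smP_eq (1/2) (by norm_num)]
  linarith

lemma sm_expr (α : ℝ) (h : 1 < α) :
    (2 ^ (8 * α - 6) / Real.pi) * (α ^ 2 * (α - 1) ^ 2 / (4 * α - 3)) *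
          (Real.Gamma (α - 1) ^ 4 / Real.Gamma (4 * α - 4)) =
      4 / Real.pi * Real.exp (smP (α - 1)) := by
  obtain ⟨s, rfl⟩ : ∃ s, α = s + 1 := ⟨α - 1, by ring⟩
  have hs : 0 < s := by linarith
  have p1 := Real.Gamma_pos_of_pos hs
  have p2 := Real.Gamma_pos_of_pos (show 0 < 4 * s by linarith)
  have e2 : ∀ y : ℝ, Real.exp (2 * y) = Real.exp y ^ 2 := fun y => by
    rw [← Real.exp_nat_mul]; norm_num
  have e4 : ∀ y : ℝ, Real.exp (4 * y) = Real.exp y ^ 4 := fun y => by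
    rw [← Real.exp_nat_mul]; norm_num
  rw [show s + 1 - 1 = s by ring, show 4 * (s+1) - 4 = 4 * s by ring,
    show 4 * (s+1) - 3 = 4 * s + 1 by ring, show 8 * (s+1) - 6 = 8 * s + 2 by ring,
    Real.rpow_add two_pos]
  unfold smP
  rw [Real.exp_sub, Real.exp_add, Real.exp_sub, Real.exp_add, Real.exp_add, e2, e2, e4,
    Real.exp_log p1, Real.exp_log p2, Real.exp_log hs, Real.exp_log (by linarith),
    Real.exp_log (by linarith), show 8 * Real.log 2 * s = Real.log 2 * (8 * s) by ring,
    ← Real.rpow_def_of_pos two_pos]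
  norm_num
  field_simp

lemma sm_val :
    (2 ^ (8 * (3 / 2 : ℝ) - 6) / Real.pi) *
        ((3 / 2 : ℝ) ^ 2 * ((3 / 2 : ℝ) - 1) ^ 2 / (4 * (3 / 2 : ℝ) - 3)) *
        (Real.Gamma ((3 / 2 : ℝ) - 1) ^ 4 / Real.Gamma (4 * (3 / 2 : ℝ) - 4)) =
      12 * Real.pi := by
  rw [show (3/2 : ℝ) - 1 = 1/2 by norm_num, show 4 * (3/2 : ℝ) - 4 = 2 by norm_num,
    show 8 * (3/2 : ℝ) - 6 = (6 : ℕ) by norm_num, Real.rpow_natCast, Real.Gamma_two,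
    Real.Gamma_one_half_eq, show √Real.pi ^ 4 = (√Real.pi ^ 2) ^ 2 by ring,
    Real.sq_sqrt Real.pi_pos.le]
  field_simp
  norm_num

theorem second_moment_min :
    (2 ^ (8 * (3 / 2 : ℝ) - 6) / Real.pi) *
        ((3 / 2 : ℝ) ^ 2 * ((3 / 2 : ℝ) - 1) ^ 2 / (4 * (3 / 2 : ℝ) - 3)) *
        (Real.Gamma ((3 / 2 : ℝ) - 1) ^ 4 / Real.Gamma (4 * (3 / 2 : ℝ) - 4)) =
      12 * Real.pi ∧
    ∀ α : ℝ, 1 < α →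
      12 * Real.pi ≤
        (2 ^ (8 * α - 6) / Real.pi) * (α ^ 2 * (α - 1) ^ 2 / (4 * α - 3)) *
          (Real.Gamma (α - 1) ^ 4 / Real.Gamma (4 * α - 4)) := by
  refine ⟨sm_val, fun α h => ?_⟩
  rw [← sm_val, sm_expr α h, sm_expr (3/2) (by norm_num)]
  have := smP_min (α - 1) (by linarith)
  rw [show (3/2 : ℝ) - 1 = 1/2 by norm_num]
  have := Real.pi_pos
  gcongr
end

section
/- lim_{R→∞} R⁴ ∫₀^∞ [sin²(πRx)/(1−(Rx)²)] · [x·tanh(πx)/(Rx)²] dx = (π²/2) ∫₀^∞ (sinh(x)cosh(x) − x)/(x³ cosh²(x)) dx, and this limit is strictly greater than 4.2071. -/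
open Real Filter

lemma odd_hasSum {u : ℕ → ℝ} {A B : ℝ} (h : HasSum u A) (he : HasSum (fun k => u (2 * k)) B) :
    HasSum (fun k => u (2 * k + 1)) (A - B) := by
  have hs : Summable (fun k => u (2 * k + 1)) :=
    h.summable.comp_injective (i := fun k : ℕ => 2 * k + 1) (fun a b hab => by simpa using hab)
  have h2 := he.even_add_odd hs.hasSum
  have := h.unique h2
  rw [this]
  simpa using hs.hasSum

lemma odd_basel : HasSum (fun k : ℕ => 1 / ((2 * k + 1 : ℝ)) ^ 2) (π ^ 2 / 8) := by
  have h := hasSum_zeta_two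
  have he : HasSum (fun k : ℕ => (1 : ℝ) / ((2 * k : ℕ) : ℝ) ^ 2) (1 / 4 * (π ^ 2 / 6)) := by
    refine (h.mul_left (1 / 4)).congr_fun ?_
    intro n
    push_cast
    rw [mul_pow, ← one_div_mul_one_div]; norm_num
  have := odd_hasSum h he
  convert this using 1
  · ext k; push_cast; rfl
  · ring

lemma coth_hasSum {t : ℝ} (ht : 0 < t) :
    HasSum (fun n : ℕ => 2 * t / (t ^ 2 + ((n : ℝ) + 1) ^ 2))
      (π * (cosh (π * t) / sinh (π * t)) - 1 / t) := by
  set z : ℂ := (t : ℂ) * Complex.I with hz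
  have hzm : z ∈ Complex.integerComplement := by
    rw [Complex.mem_integerComplement_iff]
    rintro ⟨n, hn⟩
    have := congrArg Complex.im hn
    simp [hz] at this
    exact ht.ne this
  have h1 := tendsto_logDeriv_euler_cot_sub hzm
  have h2 := ((Summable.hasSum_iff_tendsto_nat (summable_cotTerm hzm)).mpr h1).mul_left Complex.I
  have h3 : (fun n : ℕ => Complex.I * cotTerm z n) =
      fun n : ℕ => ((2 * t / (t ^ 2 + ((n : ℝ) + 1) ^ 2) : ℝ) : ℂ) := by
    ext n
    rw [cotTerm_identity hzm]
    have e1 : (z + (n + 1)) * (z - (n + 1)) = -((t ^ 2 + ((n : ℝ) + 1) ^ 2 : ℝ) : ℂ) := by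
      rw [hz]; push_cast; ring_nf; rw [Complex.I_sq]; ring
    rw [e1, hz]
    push_cast
    rw [one_div, inv_neg]
    ring_nf; rw [Complex.I_sq]; ring
  have h4 : Complex.I * (π * Complex.cot (π * z) - 1 / z) =
      ((π * (cosh (π * t) / sinh (π * t)) - 1 / t : ℝ) : ℂ) := by
    have hz0 : (t : ℂ) ≠ 0 := by exact_mod_cast ht.ne'
    have hs : Complex.sinh (π * t) ≠ 0 := by
      have : Real.sinh (π * t) ≠ 0 := (Real.sinh_pos_iff.2 (by positivity)).ne'
      exact_mod_cast this
    rw [Complex.cot, hz, ← mul_assoc, Complex.cos_mul_I, Complex.sin_mul_I]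
    push_cast
    field_simp
  rw [h3, h4] at h2
  exact_mod_cast h2

lemma tanh_hasSum {t : ℝ} (ht : 0 < t) :
    HasSum (fun k : ℕ => 8 * t / (4 * t ^ 2 + (2 * (k : ℝ) + 1) ^ 2)) (π * tanh (π * t)) := by
  have h2 := (coth_hasSum (t := 2 * t) (by positivity)).mul_left 2
  have h1 := coth_hasSum ht
  set u : ℕ → ℝ := fun n => 8 * t / (4 * t ^ 2 + (n : ℝ) ^ 2) with hu
  have h2' : HasSum u (2 * (π * (cosh (π * (2 * t)) / sinh (π * (2 * t))) - 1 / (2 * t)) + 2 / t) := by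
    have : HasSum (fun n => u (n + 1))
      (2 * (π * (cosh (π * (2 * t)) / sinh (π * (2 * t))) - 1 / (2 * t))) := by
      refine h2.congr_fun ?_
      intro n
      simp only [hu]; push_cast; ring
    have := (hasSum_nat_add_iff 1).1 this
    have e0 : u 0 = 2 / t := by
      simp only [hu]; push_cast; field_simp; norm_num; ring
    rw [Finset.sum_range_one, e0] at this
    exact this
  have h1' : HasSum (fun k => u (2 * k)) ((π * (cosh (π * t) / sinh (π * t)) - 1 / t) + 2 / t) := by
    have : HasSum (fun n => (fun k => u (2 * k)) (n + 1)) (π * (cosh (π * t) / sinh (π * t)) - 1 / t) := by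
      refine h1.congr_fun ?_
      intro n
      simp only [hu]; push_cast; field_simp; ring
    have := (hasSum_nat_add_iff (f := (fun k => u (2 * k))) 1).1 this
    have e0 : u (2 * 0) = 2 / t := by
      simp only [hu]; push_cast; field_simp; norm_num; ring
    rw [Finset.sum_range_one, e0] at this
    exact this
  have := odd_hasSum h2' h1'
  convert this using 1
  · ext k; simp [hu]
  · have hs : Real.sinh (π * t) ≠ 0 := (Real.sinh_pos_iff.2 (by positivity)).ne'
    have hc : Real.cosh (π * t) ≠ 0 := (Real.cosh_pos _).ne'
    have e : π * (2 * t) = 2 * (π * t) := by ring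
    rw [e, Real.cosh_two_mul, Real.sinh_two_mul, Real.tanh_eq_sinh_div_cosh]
    field_simp
    ring

/-- lower bound for (x - tanh x) / x^3 -/
lemma h_lower {y : ℝ} (hy : 0 < y) (N : ℕ) :
    ∑ k ∈ Finset.range N, 32 / (((2 * (k : ℝ) + 1) * π) ^ 2 * (((2 * (k : ℝ) + 1) * π) ^ 2 + 4 * y ^ 2))
      ≤ (y - tanh y) / y ^ 3 := by
  have hpi := Real.pi_pos
  have ht : 0 < y / π := by positivity
  have h1 := tanh_hasSum ht
  have h2 := odd_basel.mul_left (8 * (y / π))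
  have h3 := ((h2.sub h1).mul_left (1 / (π * y ^ 3)))
  have e : π * (y / π) = y := by field_simp
  rw [e] at h3
  have e2 : 1 / (π * y ^ 3) * (8 * (y / π) * (π ^ 2 / 8) - π * tanh y) = (y - tanh y) / y ^ 3 := by
    field_simp
  rw [e2] at h3
  have h4 : HasSum (fun k : ℕ => 32 / (((2 * (k : ℝ) + 1) * π) ^ 2 * (((2 * (k : ℝ) + 1) * π) ^ 2 + 4 * y ^ 2)))
      ((y - tanh y) / y ^ 3) := by
    refine h3.congr_fun ?_
    intro k
    have : (2 * (k : ℝ) + 1) ≠ 0 := by positivity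
    have h5 : 4 * (y / π) ^ 2 + (2 * (k : ℝ) + 1) ^ 2 = (((2 * (k : ℝ) + 1) * π) ^ 2 + 4 * y ^ 2) / π ^ 2 := by
      field_simp; ring
    rw [h5]
    have h6 : ((2 * (k : ℝ) + 1) * π) ^ 2 + 4 * y ^ 2 ≠ 0 := by positivity
    field_simp
    ring
  exact sum_le_hasSum _ (fun k _ => by positivity) h4

lemma numeric : (4.2071 : ℝ) / 4 < ∑ k ∈ Finset.range 60, 1 / (2 * (k : ℝ) + 1) ^ 3 := by
  simp only [Finset.sum_range_succ, Finset.sum_range_zero]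
  norm_num

open MeasureTheory

lemma measurable_tanh' : Measurable Real.tanh := by
  have : Real.tanh = fun x => Real.sinh x / Real.cosh x := by
    ext x; exact Real.tanh_eq_sinh_div_cosh x
  rw [this]; exact Real.measurable_sinh.div Real.measurable_cosh

lemma intOn_of_bound {f : ℝ → ℝ} (hf : Measurable f) (C : ℝ)
    (hb : ∀ x, 0 < x → |f x| ≤ C * (1 + x ^ 2)⁻¹) : IntegrableOn f (Set.Ioi 0) := by
  refine Integrable.mono' (g := fun x => C * (1 + x ^ 2)⁻¹)
    ((integrable_inv_one_add_sq.const_mul C).integrableOn) hf.aestronglyMeasurable ?_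
  refine (ae_restrict_iff' measurableSet_Ioi).2 (Eventually.of_forall ?_)
  intro x hx
  exact hb x hx

noncomputable def HH (y : ℝ) : ℝ := (y - tanh y) / y ^ 3
noncomputable def KK (y : ℝ) : ℝ := (sinh y * cosh y - y) / (y ^ 3 * cosh y ^ 2)

lemma tanh_le_self' {y : ℝ} (hy : 0 < y) : tanh y ≤ y := by
  have h := h_lower hy 0
  simp only [Finset.range_zero, Finset.sum_empty] at h
  by_contra hc
  push Not at hc
  have : (y - tanh y) / y ^ 3 < 0 := div_neg_of_neg_of_pos (by linarith) (by positivity)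
  linarith

lemma tanh_nonneg' {y : ℝ} (hy : 0 < y) : 0 ≤ tanh y := by
  rw [Real.tanh_eq_sinh_div_cosh]
  exact div_nonneg (Real.sinh_nonneg_iff.2 hy.le) (Real.cosh_pos y).le

lemma inv_cosh_sq (y : ℝ) : 1 / cosh y ^ 2 = 1 - tanh y ^ 2 := by
  have := Real.cosh_pos y
  rw [Real.tanh_eq_sinh_div_cosh]
  field_simp
  linarith [Real.cosh_sq y]

lemma KK_eq (y : ℝ) : KK y = (y * tanh y ^ 2 - (y - tanh y)) / y ^ 3 := by
  have h := inv_cosh_sq y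
  have hc := Real.cosh_pos y
  have e : y * tanh y ^ 2 - (y - tanh y) = tanh y - y * (1 / cosh y ^ 2) := by rw [h]; ring
  rw [e, KK, Real.tanh_eq_sinh_div_cosh]
  have e2 : sinh y / cosh y - y * (1 / cosh y ^ 2) = (sinh y * cosh y - y) / cosh y ^ 2 := by
    field_simp
  rw [e2, div_div, mul_comm (y ^ 3)]

lemma KK_num_nonneg {y : ℝ} (hy : 0 < y) : 0 ≤ y * tanh y ^ 2 - (y - tanh y) := by
  have h := inv_cosh_sq y
  have hc := Real.cosh_pos y
  have e : y * tanh y ^ 2 - (y - tanh y) = tanh y - y * (1 / cosh y ^ 2) := by rw [h]; ring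
  have e2 : sinh y / cosh y - y * (1 / cosh y ^ 2) = (sinh y * cosh y - y) / cosh y ^ 2 := by
    field_simp
  rw [e, Real.tanh_eq_sinh_div_cosh, e2]
  have h1 : y ≤ sinh y := Real.self_le_sinh_iff.2 hy.le
  have h2 := Real.one_le_cosh y
  apply div_nonneg _ (by positivity)
  nlinarith

lemma tanh_sq_le {y : ℝ} (hy : 0 < y) : tanh y ^ 2 ≤ y ^ 2 ∧ tanh y ^ 2 ≤ 1 := by
  constructor
  · exact pow_le_pow_left₀ (tanh_nonneg' hy) (tanh_le_self' hy) 2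
  · have := inv_cosh_sq y
    have h2 : 0 ≤ 1 / cosh y ^ 2 := by positivity
    linarith

lemma sub_tanh_le {y : ℝ} (hy : 0 < y) : y - tanh y ≤ y ^ 3 := by
  have := KK_num_nonneg hy
  have h := (tanh_sq_le hy).1
  nlinarith [mul_le_mul_of_nonneg_left h hy.le]

lemma num_bound {y a : ℝ} (hy : 0 < y) (h0 : 0 ≤ a) (h1 : a ≤ y ^ 3) (h2 : a ≤ y) :
    |a / y ^ 3| ≤ 2 * (1 + y ^ 2)⁻¹ := by
  rw [abs_of_nonneg (by positivity), ← div_eq_mul_inv, div_le_div_iff₀ (by positivity) (by positivity)]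
  nlinarith [mul_le_mul_of_nonneg_right h2 (sq_nonneg y)]

lemma HH_bound {y : ℝ} (hy : 0 < y) : |HH y| ≤ 2 * (1 + y ^ 2)⁻¹ :=
  num_bound hy (by linarith [tanh_le_self' hy]) (sub_tanh_le hy) (by linarith [tanh_nonneg' hy])

lemma KK_bound {y : ℝ} (hy : 0 < y) : |KK y| ≤ 2 * (1 + y ^ 2)⁻¹ := by
  rw [KK_eq]
  have h1 := tanh_le_self' hy
  have h2 := tanh_sq_le hy
  refine num_bound hy (KK_num_nonneg hy) ?_ ?_
  · nlinarith [mul_le_mul_of_nonneg_left h2.1 hy.le]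
  · nlinarith [mul_le_mul_of_nonneg_left h2.2 hy.le]

lemma HH_meas : Measurable HH := by
  have := measurable_tanh'
  unfold HH; fun_prop

lemma KK_meas : Measurable KK := by
  unfold KK; fun_prop

lemma HH_int : IntegrableOn HH (Set.Ioi 0) := intOn_of_bound HH_meas 2 (fun _ h => HH_bound h)
lemma KK_int : IntegrableOn KK (Set.Ioi 0) := intOn_of_bound KK_meas 2 (fun _ h => KK_bound h)

lemma hasDerivAt_tanh' (y : ℝ) : HasDerivAt tanh (1 - tanh y ^ 2) y := by
  have hc := Real.cosh_pos y
  have h := (Real.hasDerivAt_sinh y).div (Real.hasDerivAt_cosh y) hc.ne'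
  have e : tanh = sinh / cosh := by
    ext x; exact Real.tanh_eq_sinh_div_cosh x
  rw [← inv_cosh_sq, e]
  convert! h using 1
  congr 1
  linarith [Real.cosh_sq y]

lemma HH_eq_KK : ∫ x in Set.Ioi (0 : ℝ), HH x = ∫ x in Set.Ioi (0 : ℝ), KK x := by
  have key : ∫ x in Set.Ioi (0 : ℝ), (HH x - KK x) = 0 - (tanh 0 - 0) / 0 ^ 2 := by
    have hb : ∀ y : ℝ, 0 < y → |(tanh y - y) / y ^ 2| ≤ y ∧ |(tanh y - y) / y ^ 2| ≤ y⁻¹ := by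
      intro y hy
      have h1 := tanh_le_self' hy
      rw [abs_div, abs_sub_comm, abs_of_nonneg (by linarith : 0 ≤ y - tanh y),
        abs_of_nonneg (by positivity : 0 ≤ y ^ 2)]
      constructor
      · rw [div_le_iff₀ (by positivity)]
        linarith [sub_tanh_le hy, (by ring : y * y ^ 2 = y ^ 3)]
      · rw [div_le_iff₀ (by positivity), (by field_simp : y⁻¹ * y ^ 2 = y)]
        linarith [tanh_nonneg' hy]
    refine integral_Ioi_of_hasDerivAt_of_tendsto (f := fun y => (tanh y - y) / y ^ 2) ?_ ?_
      (HH_int.sub KK_int) ?_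
    · have : Tendsto (fun y : ℝ => (tanh y - y) / y ^ 2) (nhdsWithin 0 (Set.Ici 0)) (nhds 0) := by
        refine squeeze_zero_norm' (a := fun y => y) ?_ (tendsto_nhdsWithin_of_tendsto_nhds tendsto_id)
        filter_upwards [self_mem_nhdsWithin] with y hy
        rcases (show (0:ℝ) ≤ y from hy).eq_or_lt with h | h
        · rw [← h]; simp
        · exact (hb y h).1
      unfold ContinuousWithinAt
      simpa using this
    · intro y hy
      have hy : 0 < y := hy
      have h := ((hasDerivAt_tanh' y).sub (hasDerivAt_id y)).div (hasDerivAt_pow 2 y) (by positivity)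
      convert! h using 1
      rw [KK_eq, HH]
      simp only [id, Pi.sub_apply]
      field_simp
      push_cast
      ring
    · refine squeeze_zero_norm' (a := fun y => y⁻¹) ?_ tendsto_inv_atTop_zero
      filter_upwards [eventually_gt_atTop 0] with y hy using (hb y hy).2
  rw [integral_sub HH_int KK_int] at key
  simp at key
  linarith

lemma int_term {a : ℝ} (ha : 0 < a) :
    IntegrableOn (fun y : ℝ => 32 / (a ^ 2 * (a ^ 2 + 4 * y ^ 2))) (Set.Ioi 0) ∧
    ∫ y in Set.Ioi (0 : ℝ), 32 / (a ^ 2 * (a ^ 2 + 4 * y ^ 2)) = 8 * π / a ^ 3 := by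
  have e : (fun y : ℝ => 32 / (a ^ 2 * (a ^ 2 + 4 * y ^ 2))) =
      fun y => 32 / a ^ 4 * (1 + (2 / a * y) ^ 2)⁻¹ := by
    ext y
    have h1 : a ^ 2 + 4 * y ^ 2 ≠ 0 := by positivity
    have h2 : 1 + (2 / a * y) ^ 2 = (a ^ 2 + 4 * y ^ 2) / a ^ 2 := by field_simp; ring
    rw [h2]; field_simp
  rw [e]
  constructor
  · exact ((integrable_inv_one_add_sq.comp_mul_left' (by positivity : 2 / a ≠ 0)).const_mul _).integrableOn
  · rw [integral_const_mul, integral_comp_mul_left_Ioi (fun x => (1 + x ^ 2)⁻¹) 0 (by positivity : 0 < 2 / a)]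
    rw [mul_zero, integral_Ioi_inv_one_add_sq, Real.arctan_zero]
    simp only [smul_eq_mul]
    field_simp
    ring

lemma HH_int_lower : (4.2071 : ℝ) < π ^ 2 / 2 * ∫ x in Set.Ioi (0 : ℝ), HH x := by
  have hpi := Real.pi_pos
  have h1 : ∑ k ∈ Finset.range 60, 8 * π / ((2 * (k : ℝ) + 1) * π) ^ 3 ≤ ∫ x in Set.Ioi (0 : ℝ), HH x := by
    have : ∀ k ∈ Finset.range 60, 8 * π / ((2 * (k : ℝ) + 1) * π) ^ 3 = ∫ y in Set.Ioi (0 : ℝ),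
        32 / (((2 * (k : ℝ) + 1) * π) ^ 2 * (((2 * (k : ℝ) + 1) * π) ^ 2 + 4 * y ^ 2)) :=
      fun k _ => (int_term (by positivity)).2.symm
    rw [Finset.sum_congr rfl this, ← integral_finsetSum _ (fun k _ => (int_term (by positivity)).1)]
    refine setIntegral_mono_on (integrable_finsetSum _ (fun k _ => (int_term (by positivity)).1)) HH_int
      measurableSet_Ioi ?_
    intro y hy
    exact h_lower hy 60
  have h2 : ∑ k ∈ Finset.range 60, 8 * π / ((2 * (k : ℝ) + 1) * π) ^ 3 =
      8 / π ^ 2 * ∑ k ∈ Finset.range 60, 1 / (2 * (k : ℝ) + 1) ^ 3 := by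
    rw [Finset.mul_sum]
    refine Finset.sum_congr rfl fun k _ => ?_
    have : (2 * (k : ℝ) + 1) ≠ 0 := by positivity
    field_simp
  rw [h2] at h1
  have h3 := mul_le_mul_of_nonneg_left h1 (by positivity : 0 ≤ π ^ 2 / 2)
  have h4 : π ^ 2 / 2 * (8 / π ^ 2 * ∑ k ∈ Finset.range 60, 1 / (2 * (k : ℝ) + 1) ^ 3) =
    4 * ∑ k ∈ Finset.range 60, 1 / (2 * (k : ℝ) + 1) ^ 3 := by field_simp; norm_num
  rw [h4] at h3
  linarith [numeric]

noncomputable def SS (u : ℝ) : ℝ := sin (π * u) ^ 2 / (1 - u ^ 2)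
noncomputable def ss (u : ℝ) : ℝ := sin (π * u) ^ 2 / u

lemma SS_meas : Measurable SS := by unfold SS; fun_prop
lemma ss_meas : Measurable ss := by unfold ss; fun_prop

lemma ss_bound (v : ℝ) : |ss v| ≤ π := by
  have hpi := Real.pi_pos
  unfold ss
  rcases eq_or_ne v 0 with h | h
  · simp [h, hpi.le]
  have hv : 0 < |v| := abs_pos.2 h
  rw [abs_div, div_le_iff₀ hv, abs_pow, sq]
  have h1 := Real.abs_sin_le_one (π * v)
  have h2 : |sin (π * v)| ≤ |π * v| := Real.abs_sin_le_abs
  rw [abs_mul, abs_of_pos hpi] at h2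
  nlinarith [abs_nonneg (sin (π * v))]

lemma SS_eq (u : ℝ) : SS u = (ss (u + 1) - ss (u - 1)) / 2 := by
  unfold SS ss
  have e1 : sin (π * (u + 1)) = - sin (π * u) := by rw [mul_add, mul_one, Real.sin_add_pi]
  have e2 : sin (π * (u - 1)) = - sin (π * u) := by rw [mul_sub, mul_one, Real.sin_sub_pi]
  rw [e1, e2]
  rcases eq_or_ne u 1 with h | h
  · simp [h]
  rcases eq_or_ne u (-1) with h' | h'
  · simp [h']
  have h3 : u - 1 ≠ 0 := sub_ne_zero.2 h
  have h4 : u + 1 ≠ 0 := by intro h5; apply h'; linarith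
  have h5 : 1 - u ^ 2 = -((u - 1) * (u + 1)) := by ring
  rw [h5]
  field_simp
  ring

lemma SS_le_pi (u : ℝ) : |SS u| ≤ π := by
  rw [SS_eq]
  have h1 := abs_le.1 (ss_bound (u + 1))
  have h2 := abs_le.1 (ss_bound (u - 1))
  rw [abs_le]
  constructor <;> linarith [h1.1, h1.2, h2.1, h2.2]

lemma SS_le_inv {u : ℝ} (hu : 1 < u) : |SS u| ≤ 1 / (u ^ 2 - 1) := by
  unfold SS
  have : 0 < u ^ 2 - 1 := by nlinarith
  rw [abs_div, abs_sub_comm, abs_of_pos this]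
  have h1 : |sin (π * u) ^ 2| ≤ 1 := by
    rw [abs_of_nonneg (sq_nonneg _)]; exact Real.sin_sq_le_one _
  gcongr

lemma SS_bound {u : ℝ} (hu : 0 < u) : |SS u| ≤ (5 * π) * (1 + u ^ 2)⁻¹ := by
  have hpi := Real.pi_gt_three
  rw [← div_eq_mul_inv]
  rcases le_total u 2 with h | h
  · refine (SS_le_pi u).trans ?_
    rw [le_div_iff₀ (by positivity)]
    have h5 : 1 + u ^ 2 ≤ 5 := by nlinarith
    linarith [mul_le_mul_of_nonneg_left h5 (by linarith : 0 ≤ π)]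
  · refine (SS_le_inv (by linarith)).trans ?_
    have : 0 < u ^ 2 - 1 := by nlinarith
    rw [div_le_div_iff₀ this (by positivity)]
    nlinarith

lemma SS_int : IntegrableOn SS (Set.Ioi 0) := intOn_of_bound SS_meas _ (fun _ h => SS_bound h)

lemma ss_ii (a b : ℝ) : IntervalIntegrable ss volume a b := by
  refine (intervalIntegrable_const (c := π)).mono_fun ss_meas.aestronglyMeasurable ?_
  refine Eventually.of_forall fun x => ?_
  simp only [Real.norm_eq_abs]
  rw [abs_of_pos Real.pi_pos]
  exact ss_bound x

lemma SS_zero : ∫ x in Set.Ioi (0 : ℝ), SS x = 0 := by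
  have h1 := intervalIntegral_tendsto_integral_Ioi 0 SS_int tendsto_id
  refine tendsto_nhds_unique h1 ?_
  have odd : ∫ x in (1 : ℝ)..(-1), ss x = 0 := by
    have h := intervalIntegral.integral_comp_neg (a := 1) (b := -1) ss
    have e : ∀ x, ss (-x) = - ss x := by
      intro x; unfold ss; rw [mul_neg, Real.sin_neg, div_neg]; simp
    simp only [e, intervalIntegral.integral_neg, neg_neg] at h
    linarith
  have h2 : ∀ T : ℝ, ∫ x in (0 : ℝ)..T, SS x = -(∫ x in (T + 1)..(T - 1), ss x) / 2 := by
    intro T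
    simp_rw [SS_eq]
    rw [intervalIntegral.integral_div, intervalIntegral.integral_sub,
      intervalIntegral.integral_comp_add_right, intervalIntegral.integral_comp_sub_right,
      intervalIntegral.integral_interval_sub_interval_comm (ss_ii _ _) (ss_ii _ _) (ss_ii _ _)]
    · rw [zero_add, zero_sub, odd]; ring
    · have := (ss_ii (0 + 1) (T + 1)).comp_add_right 1
      simpa using this
    · have := (ss_ii (0 - 1) (T - 1)).comp_sub_right 1
      simpa using this
  have h3 : Tendsto (fun T : ℝ => 1 / (T - 1)) atTop (nhds 0) := by
    have : Tendsto (fun T : ℝ => T - 1) atTop atTop := tendsto_atTop_add_const_right _ (-1) tendsto_id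
    simpa [Function.comp_def] using tendsto_inv_atTop_zero.comp this
  refine squeeze_zero_norm' ?_ h3
  filter_upwards [eventually_gt_atTop 2] with T hT
  simp only [id]
  rw [h2]
  have h4 : ‖∫ x in (T + 1)..(T - 1), ss x‖ ≤ 1 / (T - 1) * |(T - 1) - (T + 1)| := by
    refine intervalIntegral.norm_integral_le_of_norm_le_const ?_
    intro x hx
    rw [Set.uIoc_of_ge (by linarith)] at hx
    unfold ss
    have h1 : |sin (π * x) ^ 2| ≤ 1 := by
      rw [abs_of_nonneg (sq_nonneg _)]; exact Real.sin_sq_le_one _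
    have h5 : 0 < T - 1 := by linarith
    have hx1 := hx.1
    rw [Real.norm_eq_abs, abs_div, abs_of_pos (by linarith : 0 < x)]
    gcongr
  have h5 : |(T - 1) - (T + 1)| = 2 := by
    rw [show (T - 1) - (T + 1) = -2 by ring]; norm_num
  rw [h5] at h4
  rw [norm_div, norm_neg, Real.norm_ofNat]
  linarith

noncomputable def GG (x : ℝ) : ℝ := π ^ 3 * HH (π * x)

lemma GG_meas : Measurable GG := by
  have := HH_meas
  unfold GG; fun_prop

lemma GG_int : IntegrableOn GG (Set.Ioi 0) := by
  have := (integrableOn_Ioi_comp_mul_left_iff HH 0 Real.pi_pos).2 (by simpa using HH_int)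
  exact this.const_mul _

lemma GG_integral : ∫ x in Set.Ioi (0 : ℝ), GG x = π ^ 2 * ∫ x in Set.Ioi (0 : ℝ), HH x := by
  have hpi := Real.pi_pos
  unfold GG
  rw [integral_const_mul, integral_comp_mul_left_Ioi HH 0 hpi, mul_zero, smul_eq_mul]
  field_simp

lemma RL : Tendsto (fun R : ℝ => ∫ x in Set.Ioi (0 : ℝ), cos (2 * π * R * x) * GG x) atTop (nhds 0) := by
  have h := Real.tendsto_integral_exp_smul_cocompact
    (Set.indicator (Set.Ioi 0) (fun x => (GG x : ℂ)))
  have h1 := (Complex.continuous_re.tendsto 0).comp (h.mono_left atTop_le_cocompact)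
  simp only [Complex.zero_re] at h1
  refine h1.congr ?_
  intro R
  simp only [Function.comp]
  have hint : Integrable (Set.indicator (Set.Ioi 0) (fun x => (GG x : ℂ))) :=
    (integrable_indicator_iff measurableSet_Ioi).2 GG_int.ofReal
  have hint2 : Integrable (fun v : ℝ => Real.fourierChar (-(v * R)) •
      Set.indicator (Set.Ioi 0) (fun x => (GG x : ℂ)) v) := by
    have := (Real.fourierIntegral_convergent_iff (f := Set.indicator (Set.Ioi 0) (fun x => (GG x : ℂ)))
      (μ := volume) R).2 hint
    simpa [mul_comm] using this
  have h2 := Complex.reCLM.integral_comp_comm hint2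
  simp only [Complex.reCLM_apply] at h2
  rw [← h2, ← integral_indicator measurableSet_Ioi]
  congr 1
  ext v
  by_cases hv : v ∈ Set.Ioi (0 : ℝ)
  · rw [Set.indicator_of_mem hv, Set.indicator_of_mem hv, Circle.smul_def, Real.fourierChar_apply,
      smul_eq_mul, Complex.re_mul_ofReal, Complex.exp_ofReal_mul_I_re]
    congr 1
    rw [show 2 * π * -(v * R) = -(2 * π * R * v) by ring, Real.cos_neg]
  · rw [Set.indicator_of_notMem hv, Set.indicator_of_notMem hv]; simp

lemma rem : Tendsto (fun R : ℝ => ∫ x in Set.Ioi (0 : ℝ), SS (R * x) * GG x) atTop (nhds 0) := by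
  have := tendsto_integral_filter_of_dominated_convergence (μ := volume.restrict (Set.Ioi (0 : ℝ)))
    (l := atTop) (F := fun R x => SS (R * x) * GG x) (f := fun _ => 0) (fun x => π * |GG x|)
    ?_ ?_ ?_ ?_
  · simpa using this
  · refine Eventually.of_forall fun R => ?_
    have h1 := SS_meas
    have h2 := GG_meas
    exact (Measurable.aestronglyMeasurable (by fun_prop))
  · refine Eventually.of_forall fun R => Eventually.of_forall fun x => ?_
    rw [norm_mul, Real.norm_eq_abs, Real.norm_eq_abs]
    exact mul_le_mul_of_nonneg_right (SS_le_pi _) (abs_nonneg _)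
  · exact (GG_int.abs).const_mul _
  · refine (ae_restrict_iff' measurableSet_Ioi).2 (Eventually.of_forall ?_)
    intro x hx
    have hx : 0 < x := hx
    have h1 : Tendsto (fun R : ℝ => R * x) atTop atTop := tendsto_id.atTop_mul_const hx
    have h2 : Tendsto (fun u : ℝ => (5 * π) * (1 + u ^ 2)⁻¹) atTop (nhds 0) := by
      have : Tendsto (fun u : ℝ => 1 + u ^ 2) atTop atTop :=
        tendsto_atTop_add_const_left _ _ (tendsto_pow_atTop two_ne_zero)
      simpa using (tendsto_inv_atTop_zero.comp this).const_mul (5 * π)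
    have h3 : Tendsto SS atTop (nhds 0) := by
      refine squeeze_zero_norm' ?_ h2
      filter_upwards [eventually_gt_atTop 0] with u hu using SS_bound hu
    simpa using (h3.comp h1).mul_const (GG x)

lemma SS_scale {R : ℝ} (hR : 0 < R) : IntegrableOn (fun x => SS (R * x)) (Set.Ioi 0) ∧
    ∫ x in Set.Ioi (0 : ℝ), SS (R * x) = 0 := by
  constructor
  · exact (integrableOn_Ioi_comp_mul_left_iff SS 0 hR).2 (by simpa using SS_int)
  · rw [integral_comp_mul_left_Ioi SS 0 hR, mul_zero, SS_zero, smul_zero]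

lemma decomp {R x : ℝ} (hR : 0 < R) (hx : 0 < x) :
    R ^ 4 * ((Real.sin (Real.pi * R * x)) ^ 2 / (1 - (R * x) ^ 2) *
              (x * Real.tanh (Real.pi * x) / (R * x) ^ 2)) =
    π * R ^ 2 * SS (R * x) + ((GG x / 2 - cos (2 * π * R * x) * GG x / 2) - SS (R * x) * GG x) := by
  have hpi := Real.pi_pos
  have e1 : cos (2 * π * R * x) = 1 - 2 * sin (π * R * x) ^ 2 := by
    rw [show 2 * π * R * x = 2 * (π * R * x) by ring, Real.cos_two_mul, Real.cos_sq']; ring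
  have e2 : GG x = (π * x - tanh (π * x)) / x ^ 3 := by
    unfold GG HH; field_simp
  rw [e1, e2]
  unfold SS
  rw [← mul_assoc π R x]
  rcases eq_or_ne (R * x) 1 with h | h
  · have : sin (π * R * x) = 0 := by rw [mul_assoc, h, mul_one, Real.sin_pi]
    rw [this]; simp
  · have h1 : 1 - (R * x) ^ 2 ≠ 0 := by
      have : 0 < R * x := by positivity
      rw [show 1 - (R * x) ^ 2 = (1 - R * x) * (1 + R * x) by ring]
      exact mul_ne_zero (sub_ne_zero.2 h.symm) (by positivity)
    generalize sin (π * R * x) = s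
    generalize tanh (π * x) = t
    have h2 : 1 - R ^ 2 * x ^ 2 ≠ 0 := by rwa [mul_pow] at h1
    rw [mul_pow]
    field_simp
    ring

theorem limit_integral_lambda1 :
    Filter.Tendsto
      (fun R : ℝ =>
        R ^ 4 *
          ∫ x in Set.Ioi (0 : ℝ),
            (Real.sin (Real.pi * R * x)) ^ 2 / (1 - (R * x) ^ 2) *
              (x * Real.tanh (Real.pi * x) / (R * x) ^ 2))
      Filter.atTop
      (nhds ((Real.pi ^ 2 / 2) *
        ∫ x in Set.Ioi (0 : ℝ),
          (Real.sinh x * Real.cosh x - x) / (x ^ 3 * Real.cosh x ^ 2))) ∧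
    (4.2071 : ℝ) <
      (Real.pi ^ 2 / 2) *
        ∫ x in Set.Ioi (0 : ℝ),
          (Real.sinh x * Real.cosh x - x) / (x ^ 3 * Real.cosh x ^ 2) := by
  have hK : (∫ x in Set.Ioi (0 : ℝ), (Real.sinh x * Real.cosh x - x) / (x ^ 3 * Real.cosh x ^ 2)) =
      ∫ x in Set.Ioi (0 : ℝ), HH x := HH_eq_KK.symm
  rw [hK]
  refine ⟨?_, HH_int_lower⟩
  have hlim : Tendsto (fun R : ℝ => ((∫ x in Set.Ioi (0 : ℝ), GG x) / 2
      - (∫ x in Set.Ioi (0 : ℝ), cos (2 * π * R * x) * GG x) / 2)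
      - ∫ x in Set.Ioi (0 : ℝ), SS (R * x) * GG x) atTop
      (nhds ((Real.pi ^ 2 / 2) * ∫ x in Set.Ioi (0 : ℝ), HH x)) := by
    have := ((RL.div_const 2).const_sub ((∫ x in Set.Ioi (0 : ℝ), GG x) / 2)).sub rem
    convert this using 2
    rw [GG_integral]; ring
  refine hlim.congr' ?_
  filter_upwards [eventually_gt_atTop 0] with R hR
  rw [← integral_const_mul, setIntegral_congr_fun measurableSet_Ioi (fun x hx => decomp hR hx)]
  have i1 := (SS_scale hR).1.const_mul (π * R ^ 2)
  have i2 : IntegrableOn (fun x => cos (2 * π * R * x) * GG x) (Set.Ioi 0) := by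
    refine Integrable.bdd_mul (c := 1) GG_int ?_ ?_
    · exact (Measurable.aestronglyMeasurable (by fun_prop))
    · exact Eventually.of_forall fun x => Real.abs_cos_le_one _
  have i3 : IntegrableOn (fun x => SS (R * x) * GG x) (Set.Ioi 0) := by
    refine Integrable.bdd_mul (c := π) GG_int ?_ ?_
    · have h1 := SS_meas
      exact (Measurable.aestronglyMeasurable (by fun_prop))
    · exact Eventually.of_forall fun x => SS_le_pi _
  have j1 : IntegrableOn (fun x => GG x / 2 - cos (2 * π * R * x) * GG x / 2) (Set.Ioi 0) :=
    (GG_int.div_const 2).sub (i2.div_const 2)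
  have j2 : IntegrableOn (fun x => GG x / 2 - cos (2 * π * R * x) * GG x / 2 - SS (R * x) * GG x)
      (Set.Ioi 0) := j1.sub i3
  rw [integral_add i1 j2, integral_sub j1 i3,
    integral_sub (GG_int.div_const 2) (i2.div_const 2), integral_div, integral_div,
    integral_const_mul, (SS_scale hR).2]
  ring
end

section
/- Let α = 0.559 and c = 2.3726. Then ∫_κ^∞ (x − κ)^{2α}(c − x²)e^{−x²/2} dx < 0 for every κ ≥ 0.1814. -/
open MeasureTheory Set Filter Topology

/-- The weight `t^1.118 * t^k * exp (-t²/2 - κ t)`. -/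
noncomputable def sysW (κ : ℝ) (k : ℕ) (t : ℝ) : ℝ :=
  t ^ (1.118 : ℝ) * t ^ k * Real.exp (-t ^ 2 / 2 - κ * t)

/-- Its integral over the positive half line. -/
noncomputable def sysM (κ : ℝ) (k : ℕ) : ℝ := ∫ t in Ioi (0 : ℝ), sysW κ k t

lemma sysW_cont (κ : ℝ) (k : ℕ) : Continuous (sysW κ k) := by
  have h : Continuous fun t : ℝ => t ^ (1.118 : ℝ) :=
    Real.continuous_rpow_const (by norm_num)
  unfold sysW
  fun_prop

lemma sysW_nonneg (κ : ℝ) (k : ℕ) {t : ℝ} (ht : 0 < t) : 0 ≤ sysW κ k t := by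
  unfold sysW
  positivity

lemma sysW_int (κ : ℝ) (hκ : 0 ≤ κ) (k : ℕ) : IntegrableOn (sysW κ k) (Ioi 0) := by
  have h := integrableOn_rpow_mul_exp_neg_mul_sq (b := 1 / 2) (by norm_num)
    (s := 1.118 + k) (by have : (0 : ℝ) ≤ k := k.cast_nonneg
                         linarith)
  refine Integrable.mono' h (sysW_cont κ k).aestronglyMeasurable ?_
  filter_upwards [ae_restrict_mem measurableSet_Ioi] with t ht
  have ht : 0 < t := ht
  rw [Real.norm_of_nonneg (sysW_nonneg κ k ht), Real.rpow_add ht, Real.rpow_natCast]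
  unfold sysW
  gcongr
  nlinarith [mul_nonneg hκ ht.le]

lemma sysM_nonneg (κ : ℝ) (k : ℕ) : 0 ≤ sysM κ k :=
  setIntegral_nonneg measurableSet_Ioi fun _ ht => sysW_nonneg κ k ht

lemma sysM_pos (κ : ℝ) (hκ : 0 ≤ κ) (k : ℕ) : 0 < sysM κ k := by
  unfold sysM
  rw [setIntegral_pos_iff_support_of_nonneg_ae _ (sysW_int κ hκ k)]
  · have : Function.support (sysW κ k) ∩ Ioi 0 = Ioi 0 := by
      apply inter_eq_self_of_subset_right
      intro t ht
      have ht : 0 < t := ht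
      have : 0 < sysW κ k t := by unfold sysW; positivity
      exact this.ne'
    rw [this]
    simp
  · filter_upwards [ae_restrict_mem measurableSet_Ioi] with t ht
    exact sysW_nonneg κ k ht

/-- Integration by parts. -/
lemma sysM_rec (κ : ℝ) (hκ : 0 ≤ κ) (k : ℕ) :
    sysM κ (k + 2) + κ * sysM κ (k + 1) = (2.118 + k) * sysM κ k := by
  have hi := sysW_int κ hκ
  have hd : ∀ t ∈ Ioi (0 : ℝ), HasDerivAt (sysW κ (k + 1))
      ((2.118 + k) * sysW κ k t - (sysW κ (k + 2) t + κ * sysW κ (k + 1) t)) t := by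
    intro t ht
    have ht : 0 < t := ht
    have h1 : HasDerivAt (fun t : ℝ => t ^ (1.118 : ℝ)) (1.118 * t ^ ((1.118 : ℝ) - 1)) t :=
      Real.hasDerivAt_rpow_const (Or.inl ht.ne')
    have h2 := hasDerivAt_pow (k + 1) t
    have h3 : HasDerivAt (fun t : ℝ => -t ^ 2 / 2 - κ * t) (-t - κ) t := by
      have := (((hasDerivAt_pow 2 t).neg).div_const 2).sub ((hasDerivAt_id t).const_mul κ)
      refine this.congr_deriv ?_
      push_cast
      ring
    have h := (h1.mul h2).mul h3.exp
    rw [Real.rpow_sub_one ht.ne'] at h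
    refine HasDerivAt.congr_deriv (f := sysW κ (k + 1)) h ?_
    unfold sysW
    simp only [Pi.mul_apply, Nat.add_sub_cancel]
    push_cast
    field_simp
    ring
  have hint : IntegrableOn
      (fun t => (2.118 + k) * sysW κ k t - (sysW κ (k + 2) t + κ * sysW κ (k + 1) t)) (Ioi 0) :=
    ((hi k).const_mul _).sub ((hi (k + 2)).add ((hi (k + 1)).const_mul κ))
  have ht := tendsto_zero_of_hasDerivAt_of_integrableOn_Ioi hd hint (hi (k + 1))
  have h := integral_Ioi_of_hasDerivAt_of_tendsto
    (sysW_cont κ (k + 1)).continuousWithinAt hd hint ht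
  have h0 : sysW κ (k + 1) 0 = 0 := by simp [sysW]
  have hadd : IntegrableOn (fun t => sysW κ (k + 2) t + κ * sysW κ (k + 1) t) (Ioi 0) :=
    (hi (k + 2)).add ((hi (k + 1)).const_mul κ)
  rw [h0, integral_sub ((hi k).const_mul _) hadd,
    integral_add (hi (k + 2)) ((hi (k + 1)).const_mul κ), integral_const_mul,
    integral_const_mul] at h
  unfold sysM
  linarith

/-- Coefficients of the test polynomial `q`. -/
def sysq : ℕ → ℝ
  | 0 => 88
  | 1 => -257
  | 2 => 236
  | 3 => -84
  | _ => 10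

lemma sysM_sq (κ : ℝ) (hκ : 0 ≤ κ) :
    0 ≤ ∑ i ∈ Finset.range 5, ∑ j ∈ Finset.range 5, sysq i * sysq j * sysM κ (i + j + 1) := by
  have hi := sysW_int κ hκ
  have h : ∑ i ∈ Finset.range 5, ∑ j ∈ Finset.range 5, sysq i * sysq j * sysM κ (i + j + 1)
      = ∫ t in Ioi (0 : ℝ), ∑ i ∈ Finset.range 5, ∑ j ∈ Finset.range 5,
          sysq i * sysq j * sysW κ (i + j + 1) t := by
    rw [integral_finsetSum _ fun i _ => integrable_finsetSum _ fun j _ => (hi _).const_mul _]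
    refine Finset.sum_congr rfl fun i _ => ?_
    rw [integral_finsetSum _ fun j _ => (hi _).const_mul _]
    refine Finset.sum_congr rfl fun j _ => ?_
    rw [integral_const_mul, sysM]
  rw [h]
  refine setIntegral_nonneg measurableSet_Ioi fun t ht => ?_
  have e : ∑ i ∈ Finset.range 5, ∑ j ∈ Finset.range 5, sysq i * sysq j * sysW κ (i + j + 1) t
      = sysW κ 1 t * (∑ i ∈ Finset.range 5, sysq i * t ^ i) ^ 2 := by
    rw [sq, Finset.sum_mul_sum, Finset.mul_sum]
    refine Finset.sum_congr rfl fun i _ => ?_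
    rw [Finset.mul_sum]
    refine Finset.sum_congr rfl fun j _ => ?_
    unfold sysW
    ring
  rw [e]
  exact mul_nonneg (sysW_nonneg κ 1 ht) (sq_nonneg _)

/-- The numerical inequality at `κ₀ = 0.1814`. -/
lemma sys_base : sysM 0.1814 2 - (1.8634 + 0.1814 ^ 2) * sysM 0.1814 0 < 0 := by
  have hκ : (0 : ℝ) ≤ 0.1814 := by norm_num
  have hp := sysM_pos 0.1814 hκ 0
  have h := sysM_sq 0.1814 hκ
  simp only [Finset.sum_range_succ, Finset.sum_range_zero, sysq, zero_add, Nat.reduceAdd] at h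
  have r0 := sysM_rec 0.1814 hκ 0
  have r1 := sysM_rec 0.1814 hκ 1
  have r2 := sysM_rec 0.1814 hκ 2
  have r3 := sysM_rec 0.1814 hκ 3
  have r4 := sysM_rec 0.1814 hκ 4
  have r5 := sysM_rec 0.1814 hκ 5
  have r6 := sysM_rec 0.1814 hκ 6
  have r7 := sysM_rec 0.1814 hκ 7
  norm_num at r0 r1 r2 r3 r4 r5 r6 r7 h hp ⊢
  linarith

/-- Monotonicity of the second moment in the tilt (Chebyshev). -/
lemma sys_cheb (κ₀ κ m : ℝ) (h0 : 0 ≤ κ₀) (h : κ₀ ≤ κ) (hm : 0 ≤ m) :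
    ∃ C : ℝ, 0 < C ∧ sysM κ 2 - m * sysM κ 0 ≤ C * (sysM κ₀ 2 - m * sysM κ₀ 0) := by
  have hi := sysW_int κ (h0.trans h)
  have hi0 := sysW_int κ₀ h0
  refine ⟨Real.exp (-(κ - κ₀) * √m), Real.exp_pos _, ?_⟩
  have e : ∀ κ : ℝ, 0 ≤ κ → sysM κ 2 - m * sysM κ 0
      = ∫ t in Ioi (0 : ℝ), (sysW κ 2 t - m * sysW κ 0 t) := by
    intro κ hκ
    rw [integral_sub (sysW_int κ hκ 2) ((sysW_int κ hκ 0).const_mul m), integral_const_mul]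
    rfl
  rw [e κ (h0.trans h), e κ₀ h0, ← integral_const_mul]
  refine setIntegral_mono_on ((hi 2).sub ((hi 0).const_mul m))
    (((hi0 2).sub ((hi0 0).const_mul m)).const_mul _) measurableSet_Ioi fun t ht => ?_
  have ht : 0 < t := ht
  have hs : Real.exp (-t ^ 2 / 2 - κ * t)
      = Real.exp (-(κ - κ₀) * t) * Real.exp (-t ^ 2 / 2 - κ₀ * t) := by
    rw [← Real.exp_add]
    congr 1
    ring
  have hk : (t ^ 2 - m) * (Real.exp (-(κ - κ₀) * t) - Real.exp (-(κ - κ₀) * √m)) ≤ 0 := by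
    have hsq := Real.sq_sqrt hm
    rcases le_total t (√m) with hl | hl
    · apply mul_nonpos_of_nonpos_of_nonneg
      · nlinarith
      · rw [sub_nonneg]
        apply Real.exp_le_exp.2
        nlinarith
    · apply mul_nonpos_of_nonneg_of_nonpos
      · nlinarith [Real.sqrt_nonneg m]
      · rw [sub_nonpos]
        apply Real.exp_le_exp.2
        nlinarith
  have hw : 0 ≤ t ^ (1.118 : ℝ) * Real.exp (-t ^ 2 / 2 - κ₀ * t) := by positivity
  have := mul_nonpos_of_nonneg_of_nonpos hw hk
  unfold sysW
  rw [hs]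
  linarith

theorem integral_neg_systole (α c : ℝ) (hα : α = 0.559) (hc : c = 2.3726)
    (κ : ℝ) (hκ : 0.1814 ≤ κ) :
    (∫ x in Set.Ioi κ, (x - κ) ^ (2 * α) * (c - x ^ 2) * Real.exp (-x ^ 2 / 2)) < 0 := by
  have hκ0 : 0 ≤ κ := le_trans (by norm_num) hκ
  have hi := sysW_int κ hκ0
  have hα2 : 2 * α = 1.118 := by rw [hα]; norm_num
  have key : (∫ x in Set.Ioi κ, (x - κ) ^ (2 * α) * (c - x ^ 2) * Real.exp (-x ^ 2 / 2))
      = Real.exp (-κ ^ 2 / 2) *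
        ((c - κ ^ 2) * sysM κ 0 - (2 * κ * sysM κ 1 + sysM κ 2)) := by
    have hs := (measurePreserving_add_right volume κ).setIntegral_preimage_emb
      (measurableEmbedding_addRight κ)
      (fun x : ℝ => (x - κ) ^ (2 * α) * (c - x ^ 2) * Real.exp (-x ^ 2 / 2)) (Ioi κ)
    have hpre : (fun x : ℝ => x + κ) ⁻¹' Ioi κ = Ioi 0 := by
      ext x
      simp
    rw [hpre] at hs
    rw [← hs]
    have hr : (c - κ ^ 2) * sysM κ 0 - (2 * κ * sysM κ 1 + sysM κ 2)
        = ∫ t in Ioi (0 : ℝ), ((c - κ ^ 2) * sysW κ 0 t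
          - (2 * κ * sysW κ 1 t + sysW κ 2 t)) := by
      have hadd : IntegrableOn (fun t => 2 * κ * sysW κ 1 t + sysW κ 2 t) (Ioi 0) :=
        ((hi 1).const_mul _).add (hi 2)
      rw [integral_sub ((hi 0).const_mul _) hadd,
        integral_add ((hi 1).const_mul _) (hi 2), integral_const_mul, integral_const_mul]
      rfl
    rw [hr, ← integral_const_mul]
    refine setIntegral_congr_fun measurableSet_Ioi fun t _ => ?_
    have he : Real.exp (-(t + κ) ^ 2 / 2)
        = Real.exp (-κ ^ 2 / 2) * Real.exp (-t ^ 2 / 2 - κ * t) := by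
      rw [← Real.exp_add]
      congr 1
      ring
    simp only [add_sub_cancel_right, hα2, he, sysW]
    ring
  rw [key]
  apply mul_neg_of_pos_of_neg (Real.exp_pos _)
  obtain ⟨C, hC, hle⟩ := sys_cheb 0.1814 κ (1.8634 + 0.1814 ^ 2) (by norm_num) hκ (by norm_num)
  have hneg := mul_neg_of_pos_of_neg hC sys_base
  have hrec := sysM_rec κ hκ0 0
  have hsq : (0.1814 : ℝ) ^ 2 ≤ κ ^ 2 := by gcongr
  have hmul := mul_nonneg (sub_nonneg.2 hsq) (sysM_nonneg κ 0)
  subst hc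
  simp only [zero_add, Nat.cast_zero, add_zero] at hrec
  nlinarith
end
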